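/- Define, for ρ > 0, I_XY(ρ) = log( ρ · √(1 + ρ⁻¹) ) + ρ⁻¹ · log √(1 + ρ) − ρ + ρ⁻¹ · √(1 + ρ⁻¹) · F(ρ) + ψ(ρ⁻¹) − ψ(1) − 1, where F(ρ) = ∫₀^∞ ξ · K₁(√(1 + ρ⁻¹) · ξ) · I₁(ξ) · log I₁(ξ) dξ. Then I_XY(ρ) → ∞ as ρ → ∞; that is, the capacity lower bound grows without bound in the signal-to-noise ratio parameter ρ. -/

import Mathlib

open Real MeasureTheory Set Filter

/-- Modified Bessel function of the first kind of order one,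
`I₁(z) = ∑_{k=0}^∞ (z/2)^(2k+1) / (k! (k+1)!)`. -/
noncomputable def besselI1 (z : ℝ) : ℝ :=
  ∑' k : ℕ, (z / 2) ^ (2 * k + 1) / ((Nat.factorial k : ℝ) * (Nat.factorial (k + 1) : ℝ))

/-- Modified Bessel function of the second kind of order one,
`K₁(z) = ∫₀^∞ exp (−z cosh t) cosh t dt`. -/
noncomputable def besselK1 (z : ℝ) : ℝ :=
  ∫ t in Ioi (0 : ℝ), Real.exp (-z * Real.cosh t) * Real.cosh t

/-- Digamma function `ψ(x) = d/dx log Γ(x)`. -/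
noncomputable def digamma (x : ℝ) : ℝ :=
  deriv (fun y : ℝ => Real.log (Real.Gamma y)) x

/-- Conditional output density of the noncentral chi channel with four degrees of freedom. -/
noncomputable def condDensity (σN x y : ℝ) : ℝ :=
  (2 / σN ^ 2) * (y ^ 2 / x) * Real.exp (-(x ^ 2 + y ^ 2) / σN ^ 2) *
    besselI1 (2 * x * y / σN ^ 2)

/-- Rayleigh input density with mean-square `σS²`. -/
noncomputable def rayleighDensity (σS x : ℝ) : ℝ :=
  (2 * x / σS ^ 2) * Real.exp (-x ^ 2 / σS ^ 2)

/-- `F(ρ) = ∫₀^∞ ξ K₁(√(1+ρ⁻¹) ξ) I₁(ξ) log I₁(ξ) dξ`. -/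
noncomputable def Fint (ρ : ℝ) : ℝ :=
  ∫ ξ in Ioi (0 : ℝ),
    ξ * besselK1 (Real.sqrt (1 + ρ⁻¹) * ξ) * besselI1 ξ * Real.log (besselI1 ξ)

/-- Closed-form mutual information of Theorem 1. -/
noncomputable def Ixy (ρ : ℝ) : ℝ :=
  Real.log (ρ * Real.sqrt (1 + ρ⁻¹)) + ρ⁻¹ * Real.log (Real.sqrt (1 + ρ)) - ρ +
    ρ⁻¹ * Real.sqrt (1 + ρ⁻¹) * Fint ρ + digamma ρ⁻¹ - digamma 1 - 1


/-- The ratio between the coefficients of `2 I₁` and those of `sinh`. -/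
noncomputable def besselRatio (k : ℕ) : ℝ :=
  ((2 * k + 1).factorial : ℝ) / (4 ^ k * ((k.factorial : ℝ) * ((k + 1).factorial : ℝ)))

lemma besselRatio_pos (k : ℕ) : 0 < besselRatio k := by
  unfold besselRatio; positivity

lemma besselRatio_succ (k : ℕ) :
    besselRatio (k + 1) = besselRatio k * ((2 * k + 3) / (2 * (k + 2))) := by
  unfold besselRatio
  rw [show 2 * (k + 1) + 1 = (2 * k + 1) + 1 + 1 by ring]
  simp only [Nat.factorial_succ, pow_succ]
  push_cast
  field_simp
  ring

lemma besselRatio_le_one (k : ℕ) : besselRatio k ≤ 1 := by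
  induction k with
  | zero => simp [besselRatio]
  | succ k ih =>
    rw [besselRatio_succ]
    refine mul_le_one₀ ih (by positivity) ?_
    rw [div_le_one (by positivity)]
    linarith

lemma one_le_besselRatio_sq_mul (k : ℕ) : 1 ≤ besselRatio k ^ 2 * (k + 1) := by
  induction k with
  | zero => simp [besselRatio]
  | succ k ih =>
    rw [besselRatio_succ]
    refine ih.trans ?_
    have h : (k + 1 : ℝ) ≤ ((2 * k + 3) / (2 * (k + 2))) ^ 2 * (k + 1 + 1) := by
      rw [div_pow, div_mul_eq_mul_div, le_div_iff₀ (by positivity)]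
      nlinarith [(k.cast_nonneg : (0 : ℝ) ≤ k)]
    push_cast
    calc besselRatio k ^ 2 * (k + 1)
        ≤ besselRatio k ^ 2 * (((2 * k + 3) / (2 * (k + 2))) ^ 2 * (k + 1 + 1)) := by gcongr
      _ = _ := by ring

lemma inv_sqrt_le_besselRatio (k : ℕ) : (√(k + 1 : ℝ))⁻¹ ≤ besselRatio k := by
  have hs : 0 < √(k + 1 : ℝ) := Real.sqrt_pos.2 (by positivity)
  rw [inv_le_iff_one_le_mul₀ hs]
  have h := one_le_besselRatio_sq_mul k
  rw [← Real.sq_sqrt (by positivity : (0 : ℝ) ≤ k + 1), ← mul_pow] at h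
  exact (one_le_sq_iff₀ (mul_nonneg (besselRatio_pos k).le hs.le)).1 h

lemma besselI1_term (z : ℝ) (k : ℕ) :
    (z / 2) ^ (2 * k + 1) / ((k.factorial : ℝ) * ((k + 1).factorial : ℝ)) =
      2⁻¹ * (besselRatio k * (z ^ (2 * k + 1) / ((2 * k + 1).factorial : ℝ))) := by
  unfold besselRatio
  rw [div_pow, pow_succ 2, pow_mul 2]
  field_simp
  norm_num

lemma summable_besselI1 {z : ℝ} (hz : 0 ≤ z) :
    Summable fun k : ℕ =>
      (z / 2) ^ (2 * k + 1) / ((k.factorial : ℝ) * ((k + 1).factorial : ℝ)) := by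
  refine Summable.of_nonneg_of_le (fun k => by positivity) (fun k => ?_)
    (Real.hasSum_sinh z).summable
  rw [besselI1_term]
  have h : 0 ≤ z ^ (2 * k + 1) / ((2 * k + 1).factorial : ℝ) := by positivity
  nlinarith [mul_le_mul_of_nonneg_right (besselRatio_le_one k) h]

lemma besselI1_le_exp {z : ℝ} (hz : 0 ≤ z) : besselI1 z ≤ exp z := by
  have h : besselI1 z ≤ sinh z := by
    rw [← (Real.hasSum_sinh z).tsum_eq]
    refine (summable_besselI1 hz).tsum_le_tsum (fun k => ?_) (Real.hasSum_sinh z).summable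
    rw [besselI1_term]
    have h : 0 ≤ z ^ (2 * k + 1) / ((2 * k + 1).factorial : ℝ) := by positivity
    nlinarith [mul_le_mul_of_nonneg_right (besselRatio_le_one k) h]
  refine h.trans ?_
  rw [Real.sinh_eq]
  linarith [exp_pos z, exp_pos (-z)]

/-- The convex function `y ↦ 1 / √y` lies above its tangent line at `m`. -/
lemma tangent_le_inv_sqrt {y m : ℝ} (hy : 0 < y) (hm : 0 < m) :
    (√m)⁻¹ * (3 / 2 - y / (2 * m)) ≤ (√y)⁻¹ := by
  obtain ⟨s, hs, rfl⟩ : ∃ s, 0 < s ∧ y = s ^ 2 :=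
    ⟨√y, Real.sqrt_pos.2 hy, (Real.sq_sqrt hy.le).symm⟩
  obtain ⟨t, ht, rfl⟩ : ∃ t, 0 < t ∧ m = t ^ 2 :=
    ⟨√m, Real.sqrt_pos.2 hm, (Real.sq_sqrt hm.le).symm⟩
  rw [Real.sqrt_sq hs.le, Real.sqrt_sq ht.le]
  have key : s⁻¹ - t⁻¹ * (3 / 2 - s ^ 2 / (2 * t ^ 2)) =
      (t - s) ^ 2 * (2 * t + s) / (2 * s * t ^ 3) := by
    field_simp
    ring
  have : 0 ≤ (t - s) ^ 2 * (2 * t + s) / (2 * s * t ^ 3) := by positivity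
  linarith

lemma hasSum_succ_mul_sinh (z : ℝ) :
    HasSum (fun k : ℕ => ((k : ℝ) + 1) * (z ^ (2 * k + 1) / ((2 * k + 1).factorial : ℝ)))
      ((z * cosh z + sinh z) / 2) := by
  convert! (((Real.hasSum_cosh z).mul_left z).add (Real.hasSum_sinh z)).div_const 2 using 2 with k
  rw [Nat.factorial_succ]
  push_cast
  field_simp
  ring

lemma sinh_div_le_besselI1 {z : ℝ} (hz : 0 ≤ z) :
    sinh z / (2 * √(1 + z)) ≤ besselI1 z := by
  have hm : 0 < 1 + z := by linarith
  have hs : 0 < √(1 + z) := Real.sqrt_pos.2 hm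
  have hsum : HasSum (fun k : ℕ => 2⁻¹ * (((√(1 + z))⁻¹ * (3 / 2 - ((k : ℝ) + 1) / (2 * (1 + z)))) *
      (z ^ (2 * k + 1) / ((2 * k + 1).factorial : ℝ))))
      (2⁻¹ * ((√(1 + z))⁻¹ * (3 / 2 * sinh z -
        (z * cosh z + sinh z) / 2 / (2 * (1 + z))))) := by
    convert! (((((Real.hasSum_sinh z).mul_left (3 / 2)).sub
      ((hasSum_succ_mul_sinh z).div_const (2 * (1 + z)))).mul_left (√(1 + z))⁻¹).mul_left 2⁻¹)
      using 2 with k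
    ring
  have hle : 2⁻¹ * ((√(1 + z))⁻¹ * (3 / 2 * sinh z -
        (z * cosh z + sinh z) / 2 / (2 * (1 + z)))) ≤ besselI1 z := by
    refine hasSum_le (fun k => ?_) hsum (summable_besselI1 hz).hasSum
    rw [besselI1_term]
    have := (tangent_le_inv_sqrt (by positivity : (0 : ℝ) < k + 1) hm).trans
      (inv_sqrt_le_besselRatio k)
    gcongr
  refine le_trans ?_ hle
  have hcs : z * cosh z ≤ (1 + z) * sinh z := by
    have h1 : z ≤ sinh z := Real.self_le_sinh_iff.2 hz
    have h2 : cosh z - sinh z = exp (-z) := Real.cosh_sub_sinh z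
    have h3 : exp (-z) ≤ 1 := Real.exp_le_one_iff.2 (by linarith)
    nlinarith
  have hsh : 0 ≤ sinh z := Real.sinh_nonneg_iff.2 hz
  have h4 : (z * cosh z + sinh z) / 2 / (2 * (1 + z)) ≤ 1 / 2 * sinh z := by
    rw [div_div, div_le_iff₀ (by positivity)]
    nlinarith
  rw [div_eq_inv_mul, mul_inv, mul_assoc]
  gcongr
  linarith

lemma besselI1_pos {z : ℝ} (hz : 0 < z) : 0 < besselI1 z := by
  refine lt_of_lt_of_le ?_ (sinh_div_le_besselI1 hz.le)
  have := Real.sinh_pos_iff.2 hz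
  have : 0 < √(1 + z) := Real.sqrt_pos.2 (by linarith)
  positivity

lemma log_besselI1_le {z : ℝ} (hz : 0 < z) : log (besselI1 z) ≤ z :=
  (Real.log_le_iff_le_exp (besselI1_pos hz)).2 (besselI1_le_exp hz.le)

lemma le_log_besselI1 {z : ℝ} (hz : 0 < z) :
    z - 1 / z - 1 - log 2 - log (1 + z) / 2 ≤ log (besselI1 z) := by
  have hsinh : exp z * (2 + 1 / z)⁻¹ ≤ sinh z := by
    have h1 : exp (-z) * (1 + 2 * z) ≤ exp z := by
      have : 2 * z + 1 ≤ exp (2 * z) := Real.add_one_le_exp _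
      calc exp (-z) * (1 + 2 * z) ≤ exp (-z) * exp (2 * z) := by gcongr; linarith
        _ = exp z := by rw [← Real.exp_add]; ring_nf
    rw [Real.sinh_eq, show (2 + 1 / z)⁻¹ = z / (1 + 2 * z) by field_simp; ring, ← mul_div_assoc,
      div_le_div_iff₀ (by positivity) (by positivity)]
    nlinarith
  have hlow : exp z * (2 + 1 / z)⁻¹ / (2 * √(1 + z)) ≤ besselI1 z := by
    refine le_trans ?_ (sinh_div_le_besselI1 hz.le)
    gcongr
  have hs : 0 < √(1 + z) := Real.sqrt_pos.2 (by linarith)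
  have hq : 0 < 2 + 1 / z := by positivity
  have h := Real.log_le_log (by positivity) hlow
  rw [Real.log_div (by positivity) (by positivity), Real.log_mul (by positivity) (by positivity),
    Real.log_mul (by positivity) (by positivity), Real.log_exp, Real.log_inv,
    Real.log_sqrt (by linarith)] at h
  have := Real.log_le_sub_one_of_pos hq
  linarith

/-- The integral `∫₀^∞ (cosh t)⁻ⁿ dt`. -/
noncomputable def sechIntegral (n : ℕ) : ℝ :=
  ∫ t in Ioi (0 : ℝ), (cosh t ^ n)⁻¹

lemma inv_cosh_pow_le_exp {n : ℕ} (hn : 1 ≤ n) (t : ℝ) : (cosh t ^ n)⁻¹ ≤ 2 * exp (-t) := by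
  have h1 : (1 : ℝ) ≤ cosh t := Real.one_le_cosh t
  have h2 : exp t / 2 ≤ cosh t := by
    rw [Real.cosh_eq]
    linarith [exp_pos (-t)]
  calc (cosh t ^ n)⁻¹ ≤ (exp t / 2)⁻¹ := by
        gcongr
        exact h2.trans (le_self_pow₀ h1 (by omega))
    _ = 2 * exp (-t) := by rw [inv_div, Real.exp_neg, div_eq_mul_inv]

lemma continuous_inv_cosh_pow (n : ℕ) : Continuous fun t : ℝ => (cosh t ^ n)⁻¹ :=
  (Real.continuous_cosh.pow n).inv₀ fun t => (pow_pos (Real.cosh_pos t) n).ne'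

lemma integrableOn_inv_cosh_pow {n : ℕ} (hn : 1 ≤ n) :
    IntegrableOn (fun t : ℝ => (cosh t ^ n)⁻¹) (Ioi 0) := by
  have hexp : IntegrableOn (fun t : ℝ => 2 * exp (-t)) (Ioi 0) :=
    (integrableOn_exp_neg_Ioi 0).const_mul 2
  refine Integrable.mono' hexp (continuous_inv_cosh_pow n).aestronglyMeasurable ?_
  refine Eventually.of_forall fun t => ?_
  have := Real.cosh_pos t
  rw [Real.norm_of_nonneg (by positivity)]
  exact inv_cosh_pow_le_exp hn t

lemma sechIntegral_nonneg (n : ℕ) : 0 ≤ sechIntegral n :=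
  integral_nonneg fun t => inv_nonneg.2 (pow_nonneg (Real.cosh_pos t).le n)

lemma sechIntegral_succ_le {n : ℕ} (hn : 1 ≤ n) : sechIntegral (n + 1) ≤ sechIntegral n := by
  refine integral_mono (integrableOn_inv_cosh_pow (by omega)) (integrableOn_inv_cosh_pow hn)
    fun t => ?_
  have := Real.cosh_pos t
  have := Real.one_le_cosh t
  show (cosh t ^ (n + 1))⁻¹ ≤ (cosh t ^ n)⁻¹
  gcongr
  omega

lemma hasDerivAt_sinh_div_cosh_pow (n : ℕ) (t : ℝ) :
    HasDerivAt (fun t => sinh t * (cosh t ^ (n + 1))⁻¹)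
      ((n + 1) * (cosh t ^ (n + 2))⁻¹ - n * (cosh t ^ n)⁻¹) t := by
  have hc : cosh t ≠ 0 := (Real.cosh_pos t).ne'
  refine ((Real.hasDerivAt_sinh t).mul
    (((Real.hasDerivAt_cosh t).pow (n + 1)).inv (pow_ne_zero _ hc))).congr_deriv ?_
  have hsq : sinh t ^ 2 = cosh t ^ 2 - 1 := Real.sinh_sq t
  simp only [Nat.add_sub_cancel, Pi.pow_apply, Pi.inv_apply]
  push_cast
  field_simp
  ring_nf
  rw [hsq]
  ring

lemma sechIntegral_two : sechIntegral 2 = 1 := by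
  have hlim : Tendsto (fun t : ℝ => sinh t * (cosh t ^ 1)⁻¹) atTop (nhds 1) := by
    have h0 : Tendsto (fun t : ℝ => exp (-t)) atTop (nhds 0) :=
      Real.tendsto_exp_neg_atTop_nhds_zero
    have h1 : Tendsto (fun t : ℝ => exp (-t) * (cosh t ^ 1)⁻¹) atTop (nhds 0) := by
      refine squeeze_zero (fun t => ?_) (fun t => ?_) h0
      · have := Real.cosh_pos t
        positivity
      · refine mul_le_of_le_one_right (exp_pos _).le ?_
        rw [pow_one]
        exact inv_le_one_of_one_le₀ (Real.one_le_cosh t)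
    have h2 := (tendsto_const_nhds (x := (1 : ℝ))).sub h1
    rw [sub_zero] at h2
    refine h2.congr fun t => ?_
    have hc : cosh t ≠ 0 := (Real.cosh_pos t).ne'
    rw [← Real.cosh_sub_sinh]
    field_simp
    ring
  have h := integral_Ioi_of_hasDerivAt_of_tendsto' (a := 0)
    (fun t _ => hasDerivAt_sinh_div_cosh_pow 0 t)
    (by simpa using integrableOn_inv_cosh_pow (n := 2) (by norm_num)) hlim
  simpa [sechIntegral] using h

lemma sechIntegral_add_two {n : ℕ} (hn : 1 ≤ n) :
    (n + 1) * sechIntegral (n + 2) = n * sechIntegral n := by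
  have hlim : Tendsto (fun t : ℝ => sinh t * (cosh t ^ (n + 1))⁻¹) atTop (nhds 0) := by
    have h0 : Tendsto (fun t : ℝ => 2 * exp (-t)) atTop (nhds 0) := by
      simpa using Real.tendsto_exp_neg_atTop_nhds_zero.const_mul 2
    refine squeeze_zero' ?_ (Eventually.of_forall fun t => ?_) h0
    · filter_upwards [eventually_ge_atTop 0] with t ht
      have := Real.cosh_pos t
      have := Real.sinh_nonneg_iff.2 ht
      positivity
    · refine le_trans ?_ (inv_cosh_pow_le_exp hn t)
      have hc := Real.cosh_pos t
      calc sinh t * (cosh t ^ (n + 1))⁻¹ ≤ cosh t * (cosh t ^ (n + 1))⁻¹ := by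
            gcongr
            exact (Real.sinh_lt_cosh t).le
        _ = (cosh t ^ n)⁻¹ := by rw [pow_succ]; field_simp
  have hi1 : IntegrableOn (fun t : ℝ => ((n : ℝ) + 1) * (cosh t ^ (n + 2))⁻¹) (Ioi 0) :=
    (integrableOn_inv_cosh_pow (by omega)).const_mul _
  have hi2 : IntegrableOn (fun t : ℝ => (n : ℝ) * (cosh t ^ n)⁻¹) (Ioi 0) :=
    (integrableOn_inv_cosh_pow hn).const_mul _
  have h := integral_Ioi_of_hasDerivAt_of_tendsto' (a := 0)
    (fun t _ => hasDerivAt_sinh_div_cosh_pow n t) (hi1.sub hi2) hlim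
  rw [integral_sub hi1 hi2, integral_const_mul, integral_const_mul] at h
  simp only [Real.sinh_zero, zero_mul, sub_zero] at h
  unfold sechIntegral
  linarith

lemma integrableOn_pow_mul_exp_neg_mul (n : ℕ) {r : ℝ} (hr : 0 < r) :
    IntegrableOn (fun x : ℝ => x ^ n * exp (-r * x)) (Ioi 0) := by
  have h := integrableOn_rpow_mul_exp_neg_mul_rpow (p := 1) (s := n) (b := r)
    (by linarith [(n.cast_nonneg : (0 : ℝ) ≤ n)]) one_pos hr
  simpa using h

lemma integral_pow_mul_exp_neg_mul (n : ℕ) {r : ℝ} (hr : 0 < r) :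
    ∫ x in Ioi (0 : ℝ), x ^ n * exp (-r * x) = n.factorial / r ^ (n + 1) := by
  have h := Real.integral_rpow_mul_exp_neg_mul_Ioi (a := n + 1) (r := r) (by positivity) hr
  rw [Real.Gamma_nat_eq_factorial, add_sub_cancel_right] at h
  simp only [Real.rpow_natCast, ← Nat.cast_add_one, ← neg_mul] at h
  rw [h, one_div, inv_pow, div_eq_inv_mul]

lemma besselK1_nonneg (z : ℝ) : 0 ≤ besselK1 z :=
  integral_nonneg fun t => mul_nonneg (exp_pos _).le (Real.cosh_pos t).le

lemma integral_pow_mul_exp_cosh (n : ℕ) {a : ℝ} (ha : 0 < a) (t : ℝ) :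
    ∫ x in Ioi (0 : ℝ), x ^ n * (exp (-(a * x) * cosh t) * cosh t) =
      n.factorial / a ^ (n + 1) * (cosh t ^ n)⁻¹ := by
  have hc := Real.cosh_pos t
  have h := integral_pow_mul_exp_neg_mul n (mul_pos ha hc)
  calc ∫ x in Ioi (0 : ℝ), x ^ n * (exp (-(a * x) * cosh t) * cosh t)
      = ∫ x in Ioi (0 : ℝ), (x ^ n * exp (-(a * cosh t) * x)) * cosh t := by
        congr 1
        ext x
        rw [show -(a * x) * cosh t = -(a * cosh t) * x by ring]
        ring
    _ = _ := by
        rw [integral_mul_const, h, mul_pow]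
        field_simp
        ring

lemma integrable_prod_besselK1 {n : ℕ} (hn : 1 ≤ n) {a : ℝ} (ha : 0 < a) :
    Integrable (Function.uncurry fun x t : ℝ => x ^ n * (exp (-(a * x) * cosh t) * cosh t))
      ((volume.restrict (Ioi 0)).prod (volume.restrict (Ioi 0))) := by
  have hcosh := Real.continuous_cosh
  have hcont : Continuous
      (Function.uncurry fun x t : ℝ => x ^ n * (exp (-(a * x) * cosh t) * cosh t)) := by
    unfold Function.uncurry
    fun_prop
  rw [integrable_prod_iff' hcont.aestronglyMeasurable]
  constructor
  · refine Eventually.of_forall fun t => ?_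
    have h := (integrableOn_pow_mul_exp_neg_mul n (mul_pos ha (Real.cosh_pos t))).mul_const (cosh t)
    refine h.congr (Eventually.of_forall fun x => ?_)
    simp only [Function.uncurry_apply_pair]
    rw [show -(a * x) * cosh t = -(a * cosh t) * x by ring]
    ring
  · have h : IntegrableOn (fun t : ℝ => n.factorial / a ^ (n + 1) * (cosh t ^ n)⁻¹) (Ioi 0) :=
      (integrableOn_inv_cosh_pow hn).const_mul _
    refine h.congr (Eventually.of_forall fun t => ?_)
    dsimp only
    rw [← integral_pow_mul_exp_cosh n ha t]
    refine setIntegral_congr_fun measurableSet_Ioi fun x hx => ?_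
    have hx : 0 < x := hx
    have hc := Real.cosh_pos t
    simp only [Function.uncurry_apply_pair]
    rw [Real.norm_of_nonneg (by positivity)]

lemma integrableOn_pow_mul_besselK1 {n : ℕ} (hn : 1 ≤ n) {a : ℝ} (ha : 0 < a) :
    IntegrableOn (fun x : ℝ => x ^ n * besselK1 (a * x)) (Ioi 0) := by
  have h := (integrable_prod_besselK1 hn ha).integral_prod_left
  simp only [Function.uncurry_apply_pair, integral_const_mul] at h
  exact h

lemma integral_pow_mul_besselK1 {n : ℕ} (hn : 1 ≤ n) {a : ℝ} (ha : 0 < a) :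
    ∫ x in Ioi (0 : ℝ), x ^ n * besselK1 (a * x) =
      n.factorial / a ^ (n + 1) * sechIntegral n := by
  have h := integral_integral_swap (integrable_prod_besselK1 hn ha)
  simp only [integral_const_mul, integral_pow_mul_exp_cosh n ha] at h
  exact h

/-- The coefficients of the power series of `a ^ (j + 1) ∫₀^∞ x ^ j K₁(a x) I₁(x) dx` in `a⁻¹`. -/
noncomputable def momentCoeff (j k : ℕ) : ℝ :=
  (1 / 2) ^ (2 * k + 1) / ((k.factorial : ℝ) * ((k + 1).factorial : ℝ)) *
    ((2 * k + 1 + j).factorial * sechIntegral (2 * k + 1 + j))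

lemma momentCoeff_nonneg (j k : ℕ) : 0 ≤ momentCoeff j k := by
  have := sechIntegral_nonneg (2 * k + 1 + j)
  unfold momentCoeff
  positivity

lemma momentCoeff_one (k : ℕ) : momentCoeff 1 k = 1 := by
  induction k with
  | zero => simp [momentCoeff, sechIntegral_two]
  | succ k ih =>
    rw [← ih]
    have h := sechIntegral_add_two (n := 2 * k + 1 + 1) (by omega)
    have h' : sechIntegral (2 * k + 1 + 1 + 2) =
        (2 * k + 2) / (2 * k + 3) * sechIntegral (2 * k + 1 + 1) := by
      push_cast at h
      field_simp
      linarith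
    unfold momentCoeff
    rw [show 2 * (k + 1) + 1 + 1 = 2 * k + 1 + 1 + 2 by ring, h']
    simp only [Nat.factorial_succ, show 2 * (k + 1) + 1 = 2 * k + 1 + 1 + 1 by ring, pow_succ]
    push_cast
    field_simp
    ring

lemma momentCoeff_zero_le (k : ℕ) : momentCoeff 0 k ≤ 1 := by
  rw [← momentCoeff_one k]
  have h1 := sechIntegral_succ_le (n := 2 * k + 1 + 1) (by omega)
  have h2 := sechIntegral_add_two (n := 2 * k + 1) (by omega)
  have h3 : sechIntegral (2 * k + 1) ≤ (2 * k + 2) * sechIntegral (2 * k + 1 + 1) := by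
    have h0 := sechIntegral_nonneg (2 * k + 1)
    have hk : (0 : ℝ) ≤ k := k.cast_nonneg
    push_cast at h2
    nlinarith [mul_nonneg hk h0, mul_le_mul_of_nonneg_left h1 (by positivity : (0 : ℝ) ≤ 2 * k + 2)]
  unfold momentCoeff
  rw [Nat.factorial_succ (2 * k + 1), add_zero]
  push_cast
  have : (2 * (k : ℝ) + 1 + 1) * ((2 * k + 1).factorial : ℝ) * sechIntegral (2 * k + 1 + 1) =
    ((2 * k + 1).factorial : ℝ) * ((2 * k + 2) * sechIntegral (2 * k + 1 + 1)) := by ring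
  rw [this]
  gcongr

lemma momentCoeff_two_le (k : ℕ) : momentCoeff 2 k ≤ 2 * k + 3 := by
  have h1 := sechIntegral_succ_le (n := 2 * k + 1 + 1) (by omega)
  calc momentCoeff 2 k ≤ (2 * k + 3) * momentCoeff 1 k := by
        unfold momentCoeff
        rw [Nat.factorial_succ (2 * k + 1 + 1)]
        calc _ ≤ (1 / 2 : ℝ) ^ (2 * k + 1) / ((k.factorial : ℝ) * ((k + 1).factorial : ℝ)) *
              (((2 * k + 1 + 1 + 1) * (2 * k + 1 + 1).factorial : ℕ) *
                sechIntegral (2 * k + 1 + 1)) := by gcongr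
          _ = _ := by push_cast; ring
    _ = 2 * k + 3 := by rw [momentCoeff_one, mul_one]

lemma le_momentCoeff_two (k : ℕ) : 2 * k + 2 ≤ momentCoeff 2 k := by
  have h1 := sechIntegral_succ_le (n := 2 * k + 1 + 2) (by omega)
  have h2 := sechIntegral_add_two (n := 2 * k + 1 + 1) (by omega)
  have h3 : (2 * k + 2) * sechIntegral (2 * k + 1 + 1) ≤
      (2 * k + 3) * sechIntegral (2 * k + 1 + 2) := by
    push_cast at h2
    nlinarith [mul_le_mul_of_nonneg_left h1 (by positivity : (0 : ℝ) ≤ 2 * k + 3)]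
  calc (2 * k + 2 : ℝ) = (2 * k + 2) * momentCoeff 1 k := by rw [momentCoeff_one, mul_one]
    _ = (1 / 2 : ℝ) ^ (2 * k + 1) / ((k.factorial : ℝ) * ((k + 1).factorial : ℝ)) *
          ((2 * k + 1 + 1).factorial * ((2 * k + 2) * sechIntegral (2 * k + 1 + 1))) := by
        unfold momentCoeff
        ring
    _ ≤ (1 / 2 : ℝ) ^ (2 * k + 1) / ((k.factorial : ℝ) * ((k + 1).factorial : ℝ)) *
          ((2 * k + 1 + 1).factorial * ((2 * k + 3) * sechIntegral (2 * k + 1 + 2))) := by gcongr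
    _ = momentCoeff 2 k := by
        unfold momentCoeff
        rw [Nat.factorial_succ (2 * k + 1 + 1)]
        push_cast
        ring

/-- Termwise integration of the power series of `I₁` against `x ^ j K₁(a x)`. -/
lemma hasSum_moment {a : ℝ} (ha : 0 < a) (j : ℕ)
    (hsum : Summable fun k => momentCoeff j k / a ^ (2 * k + 1 + j + 1)) :
    HasSum (fun k => momentCoeff j k / a ^ (2 * k + 1 + j + 1))
      (∫ x in Ioi (0 : ℝ), x ^ j * (besselK1 (a * x) * besselI1 x)) := by
  let F : ℕ → ℝ → ℝ := fun k x =>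
    (1 / 2) ^ (2 * k + 1) / ((k.factorial : ℝ) * ((k + 1).factorial : ℝ)) *
      (x ^ (2 * k + 1 + j) * besselK1 (a * x))
  have hint : ∀ k, IntegrableOn (F k) (Ioi 0) := fun k =>
    (integrableOn_pow_mul_besselK1 (by omega) ha).const_mul _
  have hval : ∀ k, ∫ x in Ioi (0 : ℝ), F k x = momentCoeff j k / a ^ (2 * k + 1 + j + 1) := by
    intro k
    simp only [F]
    rw [integral_const_mul, integral_pow_mul_besselK1 (by omega) ha]
    unfold momentCoeff
    ring
  have hnorm : ∀ k, ∫ x in Ioi (0 : ℝ), ‖F k x‖ = momentCoeff j k / a ^ (2 * k + 1 + j + 1) := by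
    intro k
    rw [← hval k]
    refine setIntegral_congr_fun measurableSet_Ioi fun x hx => ?_
    have hx : 0 < x := hx
    have := besselK1_nonneg (a * x)
    exact Real.norm_of_nonneg (by positivity)
  have h := hasSum_integral_of_summable_integral_norm hint (by simpa only [hnorm] using hsum)
  simp only [hval] at h
  convert! h using 1
  refine setIntegral_congr_fun measurableSet_Ioi fun x hx => ?_
  simp only [F, besselI1]
  rw [← mul_assoc, ← tsum_mul_left]
  refine tsum_congr fun k => ?_
  rw [div_pow, div_pow, one_pow, pow_add x]
  ring


/-- The moment `∫₀^∞ x ^ j K₁(√(1 + ρ⁻¹) x) I₁(x) dx`. -/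
noncomputable def besselMoment (ρ : ℝ) (j : ℕ) : ℝ :=
  ∫ x in Ioi (0 : ℝ), x ^ j * (besselK1 (√(1 + ρ⁻¹) * x) * besselI1 x)

lemma one_lt_sqrt_one_add_inv {ρ : ℝ} (hρ : 0 < ρ) : 1 < √(1 + ρ⁻¹) := by
  rw [Real.lt_sqrt one_pos.le]
  have := inv_pos.2 hρ
  linarith

lemma moment_term_eq {ρ : ℝ} (hρ : 0 < ρ) (c : ℝ) (j k : ℕ) :
    c / √(1 + ρ⁻¹) ^ (2 * k + 1 + j + 1) = c * (ρ / (1 + ρ)) ^ k / √(1 + ρ⁻¹) ^ (j + 2) := by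
  have hsq : √(1 + ρ⁻¹) ^ 2 = (ρ / (1 + ρ))⁻¹ := by
    rw [Real.sq_sqrt (by positivity)]
    field_simp
    ring
  rw [show 2 * k + 1 + j + 1 = 2 * k + (j + 2) by ring, pow_add, pow_mul, hsq, inv_pow]
  have := one_lt_sqrt_one_add_inv hρ
  field_simp

lemma norm_ratio_lt_one {ρ : ℝ} (hρ : 0 < ρ) : ‖ρ / (1 + ρ)‖ < 1 := by
  rw [Real.norm_of_nonneg (by positivity), div_lt_one (by positivity)]
  linarith

lemma hasSum_ratio_pow {ρ : ℝ} (hρ : 0 < ρ) :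
    HasSum (fun k : ℕ => (ρ / (1 + ρ)) ^ k) (1 + ρ) := by
  convert! hasSum_geometric_of_norm_lt_one (norm_ratio_lt_one hρ) using 1
  field_simp
  ring

lemma hasSum_mul_ratio_pow {ρ : ℝ} (hρ : 0 < ρ) :
    HasSum (fun k : ℕ => (2 * (k : ℝ) + 2) * (ρ / (1 + ρ)) ^ k) (2 * (1 + ρ) ^ 2) := by
  have h := ((hasSum_coe_mul_geometric_of_norm_lt_one (norm_ratio_lt_one hρ)).mul_left 2).add
    ((hasSum_ratio_pow hρ).mul_left 2)
  convert! h using 1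
  · ext k
    ring
  · field_simp
    ring

lemma sqrt_one_add_inv_sq {ρ : ℝ} (hρ : 0 < ρ) : ρ * √(1 + ρ⁻¹) ^ 2 = 1 + ρ := by
  rw [Real.sq_sqrt (by positivity)]
  field_simp
  ring

lemma besselMoment_one {ρ : ℝ} (hρ : 0 < ρ) : √(1 + ρ⁻¹) * besselMoment ρ 1 = ρ := by
  have ha := one_lt_sqrt_one_add_inv hρ
  have h : HasSum (fun k => momentCoeff 1 k / √(1 + ρ⁻¹) ^ (2 * k + 1 + 1 + 1))
      ((1 + ρ) / √(1 + ρ⁻¹) ^ (1 + 2)) := by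
    simp only [moment_term_eq hρ _ 1, momentCoeff_one, one_mul]
    exact (hasSum_ratio_pow hρ).div_const _
  rw [besselMoment, (hasSum_moment (by linarith) 1 h.summable).unique h, ← sqrt_one_add_inv_sq hρ]
  field_simp

lemma hasSum_besselMoment_zero {ρ : ℝ} (hρ : 0 < ρ) :
    HasSum (fun k => momentCoeff 0 k * (ρ / (1 + ρ)) ^ k / √(1 + ρ⁻¹) ^ (0 + 2))
      (besselMoment ρ 0) := by
  have ha := one_lt_sqrt_one_add_inv hρ
  have h : Summable fun k => momentCoeff 0 k / √(1 + ρ⁻¹) ^ (2 * k + 1 + 0 + 1) := by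
    simp only [moment_term_eq hρ _ 0]
    refine Summable.div_const ?_ _
    refine (hasSum_ratio_pow hρ).summable.of_nonneg_of_le
      (fun k => mul_nonneg (momentCoeff_nonneg 0 k) (by positivity)) fun k => ?_
    exact mul_le_of_le_one_left (by positivity) (momentCoeff_zero_le k)
  have hmoment := hasSum_moment (by linarith) 0 h
  simp only [moment_term_eq hρ _ 0] at hmoment
  exact hmoment

lemma besselMoment_zero_le {ρ : ℝ} (hρ : 0 < ρ) : besselMoment ρ 0 ≤ ρ := by
  have ha := one_lt_sqrt_one_add_inv hρ
  have h := hasSum_le (fun k => ?_) (hasSum_besselMoment_zero hρ)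
    ((hasSum_ratio_pow hρ).div_const (√(1 + ρ⁻¹) ^ (0 + 2)))
  · rwa [← sqrt_one_add_inv_sq hρ, zero_add, mul_div_cancel_right₀ _ (by positivity)] at h
  · gcongr
    exact mul_le_of_le_one_left (by positivity) (momentCoeff_zero_le k)

lemma besselMoment_zero_pos {ρ : ℝ} (hρ : 0 < ρ) : 0 < besselMoment ρ 0 := by
  have ha := one_lt_sqrt_one_add_inv hρ
  have h := hasSum_besselMoment_zero hρ
  have hc : 0 < momentCoeff 0 0 := by
    have := sechIntegral_succ_le (n := 1) le_rfl
    rw [sechIntegral_two] at this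
    have : 0 < sechIntegral 1 := by linarith
    simp [momentCoeff, this]
  refine lt_of_lt_of_le ?_ (le_hasSum h 0 fun k _ => ?_)
  · positivity
  · have := momentCoeff_nonneg 0 k
    positivity

lemma le_besselMoment_two {ρ : ℝ} (hρ : 0 < ρ) : 2 * ρ ^ 2 ≤ besselMoment ρ 2 := by
  have ha := one_lt_sqrt_one_add_inv hρ
  have h : Summable fun k => momentCoeff 2 k / √(1 + ρ⁻¹) ^ (2 * k + 1 + 2 + 1) := by
    simp only [moment_term_eq hρ _ 2]
    refine Summable.div_const ?_ _
    refine ((hasSum_mul_ratio_pow hρ).add (hasSum_ratio_pow hρ)).summable.of_nonneg_of_le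
      (fun k => mul_nonneg (momentCoeff_nonneg 2 k) (by positivity)) fun k => ?_
    rw [← add_one_mul]
    gcongr
    linarith [momentCoeff_two_le k]
  have h2 := hasSum_moment (by linarith) 2 h
  simp only [moment_term_eq hρ _ 2] at h2
  have h3 := hasSum_le (fun k => ?_)
    ((hasSum_mul_ratio_pow hρ).div_const (√(1 + ρ⁻¹) ^ (2 + 2))) h2
  · refine le_trans (le_of_eq ?_) h3
    rw [← sqrt_one_add_inv_sq hρ]
    field_simp
  · gcongr
    exact le_momentCoeff_two k

lemma integrableOn_besselMoment {ρ : ℝ} {j : ℕ} (h : 0 < besselMoment ρ j) :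
    IntegrableOn (fun x => x ^ j * (besselK1 (√(1 + ρ⁻¹) * x) * besselI1 x)) (Ioi 0) :=
  not_imp_comm.1 integral_undef h.ne'

lemma measurable_besselI1 : Measurable besselI1 := by
  unfold besselI1
  exact Measurable.tsum fun k => by fun_prop

lemma le_log_besselI1_affine {ρ x : ℝ} (hρ : 1 ≤ ρ) (hx : 0 < x) :
    x * (1 - 1 / (2 * ρ)) - 1 / x - (1 + log 2 + log ρ / 2) ≤ log (besselI1 x) := by
  have h1 := le_log_besselI1 hx
  have h2 := Real.log_le_sub_one_of_pos (show 0 < (1 + x) / ρ by positivity)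
  rw [Real.log_div (by positivity) (by positivity)] at h2
  have h3 : 1 / ρ ≤ 1 := by
    rw [div_le_one (by positivity)]
    exact hρ
  have h4 : (1 + x) / ρ = 1 / ρ + 2 * (x * (1 / (2 * ρ))) := by
    field_simp
  linarith

lemma le_Fint {ρ : ℝ} (hρ : 1 ≤ ρ) :
    (1 - 1 / (2 * ρ)) * besselMoment ρ 2 - besselMoment ρ 0 -
      (1 + log 2 + log ρ / 2) * besselMoment ρ 1 ≤ Fint ρ := by
  have hρ0 : 0 < ρ := by linarith
  set C := 1 + log 2 + log ρ / 2 with hC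
  have hC0 : 0 ≤ C := by
    have := Real.log_nonneg hρ
    have := Real.log_nonneg one_le_two
    positivity
  have ha := one_lt_sqrt_one_add_inv hρ0
  have hI0 := integrableOn_besselMoment (besselMoment_zero_pos hρ0)
  have hI1 := integrableOn_besselMoment (ρ := ρ) (j := 1)
    (pos_of_mul_pos_right (by rw [besselMoment_one hρ0]; exact hρ0) (by linarith))
  have hI2 := integrableOn_besselMoment ((by positivity : 0 < 2 * ρ ^ 2).trans_le
    (le_besselMoment_two hρ0))
  have hle : ∀ x ∈ Ioi (0 : ℝ),
      (1 - 1 / (2 * ρ)) * (x ^ 2 * (besselK1 (√(1 + ρ⁻¹) * x) * besselI1 x)) -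
        x ^ 0 * (besselK1 (√(1 + ρ⁻¹) * x) * besselI1 x) -
        C * (x ^ 1 * (besselK1 (√(1 + ρ⁻¹) * x) * besselI1 x)) ≤
      x * besselK1 (√(1 + ρ⁻¹) * x) * besselI1 x * log (besselI1 x) := by
    intro x hx
    have hx : 0 < x := hx
    have hK := besselK1_nonneg (√(1 + ρ⁻¹) * x)
    have hI := besselI1_pos hx
    have h := mul_le_mul_of_nonneg_left (le_log_besselI1_affine hρ hx)
      (by positivity : 0 ≤ x * besselK1 (√(1 + ρ⁻¹) * x) * besselI1 x)
    refine le_trans (le_of_eq ?_) h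
    rw [← hC]
    field_simp
  have hG := ((hI2.const_mul (1 - 1 / (2 * ρ))).sub hI0).sub (hI1.const_mul C)
  have hF : IntegrableOn
      (fun x => x * besselK1 (√(1 + ρ⁻¹) * x) * besselI1 x * log (besselI1 x)) (Ioi 0) := by
    refine Integrable.mono' ((hI2.add hI0).add (hI1.const_mul C)) ?_ ?_
    · refine AEStronglyMeasurable.mul ?_
        (Real.measurable_log.comp measurable_besselI1).aestronglyMeasurable
      simpa only [pow_one, mul_assoc] using hI1.aestronglyMeasurable
    · refine (ae_restrict_iff' measurableSet_Ioi).2 (Eventually.of_forall fun x hx => ?_)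
      have hx : 0 < x := hx
      have hK := besselK1_nonneg (√(1 + ρ⁻¹) * x)
      have hI := besselI1_pos hx
      have hlog : |log (besselI1 x)| ≤ x + 1 / x + C := by
        have h1 := le_log_besselI1_affine hρ hx
        have h2 := log_besselI1_le hx
        have h3 : 1 / (2 * ρ) ≤ 1 := by
          rw [div_le_one (by positivity)]
          linarith
        have h4 := mul_nonneg hx.le (sub_nonneg.2 h3)
        have h5 : 0 < 1 / x := by positivity
        rw [abs_le]
        constructor <;> linarith
      rw [norm_mul, Real.norm_of_nonneg (by positivity : 0 ≤ x * _ * _), Real.norm_eq_abs]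
      refine (mul_le_mul_of_nonneg_left hlog (by positivity)).trans (le_of_eq ?_)
      simp only [Pi.add_apply]
      field_simp
  refine le_trans (le_of_eq ?_) (setIntegral_mono_on hG hF measurableSet_Ioi hle)
  have hI20 : IntegrableOn (fun x =>
      (1 - 1 / (2 * ρ)) * (x ^ 2 * (besselK1 (√(1 + ρ⁻¹) * x) * besselI1 x)) -
        x ^ 0 * (besselK1 (√(1 + ρ⁻¹) * x) * besselI1 x)) (Ioi 0) :=
    (hI2.const_mul _).sub hI0
  simp only [Pi.sub_apply]
  rw [integral_sub hI20 (hI1.const_mul C),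
    integral_sub (hI2.const_mul _) hI0, integral_const_mul, integral_const_mul]
  rfl

lemma neg_inv_le_digamma_sub {x : ℝ} (hx : 0 < x) : -x⁻¹ ≤ digamma x - digamma 1 := by
  have hdiff : ∀ y : ℝ, 0 < y → DifferentiableAt ℝ (fun y => log (Real.Gamma y)) y := by
    intro y hy
    refine (Real.differentiableAt_Gamma fun m => ?_).log (Real.Gamma_pos_of_pos hy).ne'
    exact ne_of_gt (by linarith [(m.cast_nonneg : (0 : ℝ) ≤ m)])
  have hrec : digamma (x + 1) = digamma x + x⁻¹ := by
    unfold digamma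
    rw [← deriv_comp_add_const, ← Real.deriv_log x,
      ← deriv_fun_add (hdiff x hx) (Real.differentiableAt_log hx.ne')]
    apply EventuallyEq.deriv_eq
    filter_upwards [eventually_gt_nhds hx] with y hy
    rw [Real.Gamma_add_one hy.ne', Real.log_mul hy.ne' (Real.Gamma_pos_of_pos hy).ne', add_comm]
  have hmono : digamma 1 ≤ digamma (x + 1) :=
    Real.convexOn_log_Gamma.monotoneOn_deriv (fun y hy => hdiff y hy)
      (mem_Ioi.2 one_pos) (mem_Ioi.2 (by linarith)) (by linarith)
  linarith

lemma half_log_sub_le_Ixy {ρ : ℝ} (hρ : 1 ≤ ρ) : log ρ / 2 - (4 + log 2) ≤ Ixy ρ := by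
  have hρ0 : 0 < ρ := by linarith
  have ha := one_lt_sqrt_one_add_inv hρ0
  have hlog1 : log ρ ≤ log (ρ * √(1 + ρ⁻¹)) :=
    Real.log_le_log hρ0 (le_mul_of_one_le_right hρ0.le ha.le)
  have hlog2 : 0 ≤ ρ⁻¹ * log √(1 + ρ) :=
    mul_nonneg (inv_pos.2 hρ0).le (Real.log_nonneg (Real.one_le_sqrt.2 (by linarith)))
  have hψ := neg_inv_le_digamma_sub (inv_pos.2 hρ0)
  rw [inv_inv] at hψ
  have hF : 2 * ρ - 2 - (1 + log 2 + log ρ / 2) ≤ ρ⁻¹ * √(1 + ρ⁻¹) * Fint ρ := by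
    have hcoef : 0 ≤ 1 - 1 / (2 * ρ) := by
      rw [sub_nonneg, div_le_one (by positivity)]
      linarith
    have h2 := mul_le_mul_of_nonneg_left (le_besselMoment_two hρ0) hcoef
    have hlow : (1 - 1 / (2 * ρ)) * (2 * ρ ^ 2) - ρ -
        (1 + log 2 + log ρ / 2) * besselMoment ρ 1 ≤ Fint ρ := by
      linarith [le_Fint hρ, besselMoment_zero_le hρ0]
    have h3 := mul_le_mul_of_nonneg_left hlow
      (by positivity : 0 ≤ ρ⁻¹ * √(1 + ρ⁻¹))
    refine le_trans ?_ h3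
    have h4 : ρ⁻¹ * √(1 + ρ⁻¹) * ((1 - 1 / (2 * ρ)) * (2 * ρ ^ 2) - ρ -
        (1 + log 2 + log ρ / 2) * besselMoment ρ 1) =
        √(1 + ρ⁻¹) * (2 * ρ - 2) -
          (1 + log 2 + log ρ / 2) * (ρ⁻¹ * (√(1 + ρ⁻¹) * besselMoment ρ 1)) := by
      field_simp
      ring
    rw [h4, besselMoment_one hρ0, inv_mul_cancel₀ hρ0.ne', mul_one]
    nlinarith
  unfold Ixy
  linarith

/-- the capacity lower bound I_XY(ρ) grows without bound as ρ → ∞. -/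
theorem stmt_10 : Tendsto Ixy atTop atTop := by
  have h : Tendsto (fun ρ : ℝ => log ρ / 2 - (4 + log 2)) atTop atTop :=
    tendsto_atTop_add_const_right _ _ (Real.tendsto_log_atTop.atTop_div_const two_pos)
  refine tendsto_atTop_mono' _ ?_ h
  filter_upwards [eventually_ge_atTop 1] with ρ hρ using half_log_sub_le_Ixy hρ
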